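/- Assume the pairs (𝓡₁, 𝓡₂) and (𝓡₁*, 𝓡₂*) are incommensurate. Then for every f ∈ L¹(Γ_𝓜) and each j ∈ {1,2}, the averages (2N+1)^{−2} Σ_{R_j ∈ 𝓡_j(N)} f({R_j + γ_j}_𝓜) converge, as N → ∞, to ⨍_{Γ_𝓜} f(x) dx, both for Lebesgue-almost every γ_j ∈ Γ_j and in the L¹(Γ_j)-sense (as functions of γ_j). -/

import Mathlib

open scoped Real BigOperators
open MeasureTheory Filter Topology Matrix

noncomputable section

/-- The 2×2 rotation matrix through angle `φ`. -/
def Rot (φ : ℝ) : Matrix (Fin 2) (Fin 2) ℝ :=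
  !![Real.cos φ, -Real.sin φ; Real.sin φ, Real.cos φ]

/-- Euclidean norm on `ℝ²`. -/
def norm2 (v : Fin 2 → ℝ) : ℝ := Real.sqrt (v 0 ^ 2 + v 1 ^ 2)

/-- Euclidean norm on `ℝ³`. -/
def norm3 (v : Fin 3 → ℝ) : ℝ := Real.sqrt (v 0 ^ 2 + v 1 ^ 2 + v 2 ^ 2)

/-- Cast an integer vector to a real vector. -/
def iv (n : Fin 2 → ℤ) : Fin 2 → ℝ := fun i => (n i : ℝ)

/-- The lattice `M ℤ²`. -/
def lat (M : Matrix (Fin 2) (Fin 2) ℝ) : Set (Fin 2 → ℝ) :=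
  {v | ∃ n : Fin 2 → ℤ, v = M.mulVec (iv n)}

/-- The unit cell `M [0,1)²`. -/
def cell (M : Matrix (Fin 2) (Fin 2) ℝ) : Set (Fin 2 → ℝ) :=
  {v | ∃ t : Fin 2 → ℝ, (∀ i, t i ∈ Set.Ico (0 : ℝ) 1) ∧ v = M.mulVec t}

/-- The reciprocal matrix `2π M⁻ᵀ`. -/
def recip (M : Matrix (Fin 2) (Fin 2) ℝ) : Matrix (Fin 2) (Fin 2) ℝ :=
  (2 * π) • (M⁻¹)ᵀ

/-- A pair of lattices with reciprocal-lattice matrices `B1`, `B2` is incommensurate iff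
`G₁ + G₂ = 0` with `G_k` in the respective reciprocal lattice implies `G₁ = G₂ = 0`. -/
def Incommensurate (B1 B2 : Matrix (Fin 2) (Fin 2) ℝ) : Prop :=
  ∀ G1 ∈ lat B1, ∀ G2 ∈ lat B2, G1 + G2 = 0 → G1 = 0 ∧ G2 = 0

/-- Euclidean distance from `v ∈ ℝ²` to the integer lattice `ℤ²`. -/
def distZ2 (v : Fin 2 → ℝ) : ℝ := ⨅ m : Fin 2 → ℤ, norm2 (v - iv m)

/-- `θ` is a `(q,K,σ)`-Diophantine 2D rotation. -/
def IsDiophantine (A : Matrix (Fin 2) (Fin 2) ℝ) (q K σ θ : ℝ) : Prop :=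
  ∀ n : Fin 2 → ℤ, n ≠ 0 →
    K / norm2 (iv n) ^ (2 * σ) ≤ distZ2 ((q • (Aᵀ * Rot θ * (A⁻¹)ᵀ)).mulVec (iv n)) ∧
    K / norm2 (iv n) ^ (2 * σ) ≤ distZ2 ((q⁻¹ • (Aᵀ * Rot (-θ) * (A⁻¹)ᵀ)).mulVec (iv n))

/-- The moiré length scale ratio `ρ_𝓜`. -/
def rhoM (q θ : ℝ) : ℝ :=
  (Real.sqrt ((Real.sqrt q - (Real.sqrt q)⁻¹) ^ 2 + 4 * Real.sin (θ / 2) ^ 2))⁻¹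

/-- Riemann zeta function (for real `s > 1`, via its Dirichlet series). -/
def zetaR (s : ℝ) : ℝ := ∑' n : ℕ, ((n : ℝ) + 1) ^ (-s)

/-- Operator (spectral) norm of a 2×2 real matrix w.r.t. the Euclidean norm. -/
def opNorm2 (M : Matrix (Fin 2) (Fin 2) ℝ) : ℝ :=
  ⨆ x : {x : Fin 2 → ℝ // norm2 x ≤ 1}, norm2 (M.mulVec x.1)

/-- Embedding `ℝ² ↪ ℝ³`, `x ↦ (x, 0)`. -/
def emb (x : Fin 2 → ℝ) : Fin 3 → ℝ := ![x 0, x 1, 0]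

/-- Japanese bracket `⟨x⟩ = (1 + |x|²)^{1/2}` on `ℝ³`. -/
def jap3 (x : Fin 3 → ℝ) : ℝ := Real.sqrt (1 + norm3 x ^ 2)

/-- The region `ℝ² × [−L, L] ⊆ ℝ³`. -/
def slab (L : ℝ) : Set (Fin 3 → ℝ) := {x | x 2 ∈ Set.Icc (-L) L}

/-- Euclidean inner product on `ℝ²`. -/
def dot2 (a b : Fin 2 → ℝ) : ℝ := ∑ i, a i * b i

/-- The index box `⟦−N, N⟧²`. -/
def box (N : ℕ) : Finset (Fin 2 → ℤ) :=
  Finset.Icc (fun _ => -(N : ℤ)) (fun _ => (N : ℤ))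

/-- The normalized Dirichlet kernel `Δ_N^j` of the lattice `A_j ℤ²`. -/
def Dir (Aj : Matrix (Fin 2) (Fin 2) ℝ) (N : ℕ) (G : Fin 2 → ℝ) : ℂ :=
  (((2 * N + 1 : ℝ)) ^ 2)⁻¹ •
    ∑ n ∈ box N, Complex.exp (Complex.I * (dot2 G (Aj.mulVec (iv n)) : ℝ))

/-!
In the coordinates of the moiré cell the averages are Birkhoff averages along the translations
of the torus `ℝ²/𝓡_𝓜` by the vectors of the layer lattice. A character of this torus that is
trivial on the layer lattice is a vector common to `𝓡_𝓜*` and `𝓡_j*`; since `B_𝓜 = B₁ - B₂`,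
incommensurability of the reciprocal lattices forces it to vanish. Hence, by Weyl's criterion, the
averages of a continuous function converge everywhere to its mean. Vitali covering by cubes in the
orbits gives the weak-type `(1,1)` bound for the maximal function, and the Banach principle extends
almost sure convergence to `L¹`; convergence in `L¹` extends because averaging is an
`L¹`-contraction. Finally, a bounded set of shifts covers the torus only finitely often, so
both modes of convergence pass from the torus back to `Γ_j`.
-/

open scoped ENNReal Finset

section Cubes

variable (ι : Type*) [Fintype ι] [DecidableEq ι]

/-- The cube `⟦-N, N⟧^ι` of integer vectors, over which all averages are taken. -/
def cube (N : ℕ) : Finset (ι → ℤ) := Finset.Icc (fun _ => -(N : ℤ)) (fun _ => (N : ℤ))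

lemma card_cube (N : ℕ) : #(cube ι N) = (2 * N + 1) ^ Fintype.card ι := by
  have : ((N : ℤ) + 1 - -N).toNat = 2 * N + 1 := by lia
  simp only [cube, Pi.card_Icc, Int.card_Icc, this, Finset.prod_const, Finset.card_univ]

lemma card_cube_pos (N : ℕ) : 0 < #(cube ι N) := by
  rw [card_cube]
  positivity

lemma card_cube_two_mul_le (N : ℕ) : #(cube ι (2 * N)) ≤ 2 ^ Fintype.card ι * #(cube ι N) := by
  rw [card_cube, card_cube, ← mul_pow]
  gcongr
  lia

lemma card_cube_five_mul_le (N : ℕ) : #(cube ι (5 * N)) ≤ 5 ^ Fintype.card ι * #(cube ι N) := by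
  rw [card_cube, card_cube, ← mul_pow]
  gcongr
  lia

lemma tendsto_card_cube_add_div (k : ℕ) :
    Tendsto (fun N => (#(cube ι (N + k)) / #(cube ι N) : ℝ)) atTop (𝓝 1) := by
  have hbase : Tendsto (fun N : ℕ => 1 + 2 * k / (2 * N + 1 : ℝ)) atTop (𝓝 (1 + 0)) :=
    tendsto_const_nhds.add <| tendsto_const_nhds.div_atTop <| tendsto_atTop_add_const_right _ _ <|
      tendsto_natCast_atTop_atTop.const_mul_atTop two_pos
  have hpow := hbase.pow (Fintype.card ι)
  rw [add_zero, one_pow] at hpow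
  refine hpow.congr fun N => ?_
  rw [card_cube, card_cube, Nat.cast_pow, Nat.cast_pow, ← div_pow]
  push_cast
  congr 1
  field_simp
  ring

variable {ι}

lemma mem_cube {N : ℕ} {n : ι → ℤ} : n ∈ cube ι N ↔ ‖n‖ ≤ N := by
  rw [pi_norm_le_iff_of_nonneg N.cast_nonneg, cube, Finset.mem_Icc, Pi.le_def, Pi.le_def,
    ← forall_and]
  refine forall_congr' fun i => ?_
  rw [← abs_le, Int.norm_eq_abs]
  norm_cast

lemma cube_mono {M N : ℕ} (h : M ≤ N) : cube ι M ⊆ cube ι N := fun _ hn =>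
  mem_cube.2 <| (mem_cube.1 hn).trans <| Nat.cast_le.2 h

lemma coe_map_cube (e : ι → ℤ) (N : ℕ) :
    ((cube ι N).map (addRightEmbedding e) : Set (ι → ℤ)) = Metric.closedBall e N := by
  ext x
  simp only [Finset.mem_coe, Finset.mem_map, addRightEmbedding_apply, Metric.mem_closedBall,
    dist_eq_norm]
  constructor
  · rintro ⟨n, hn, rfl⟩
    rw [add_sub_cancel_right]
    exact mem_cube.1 hn
  · exact fun h => ⟨x - e, mem_cube.2 h, sub_add_cancel x e⟩

lemma map_cube_subset {e : ι → ℤ} {k : ℕ} (he : e ∈ cube ι k) (N : ℕ) :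
    (cube ι N).map (addRightEmbedding e) ⊆ cube ι (N + k) := by
  intro x hx
  obtain ⟨n, hn, rfl⟩ := Finset.mem_map.1 hx
  refine mem_cube.2 ((norm_add_le n e).trans ?_)
  push_cast
  exact add_le_add (mem_cube.1 hn) (mem_cube.1 he)

lemma exists_pairwiseDisjoint_map_cube (E : Finset (ι → ℤ)) (r : (ι → ℤ) → ℕ) :
    ∃ U ⊆ E, (U : Set (ι → ℤ)).PairwiseDisjoint
        (fun e => (cube ι (r e)).map (addRightEmbedding e)) ∧
      #E ≤ 5 ^ Fintype.card ι * ∑ e ∈ U, #(cube ι (r e)) := by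
  obtain ⟨u, huE, hdisj, hcover⟩ := Vitali.exists_disjoint_subfamily_covering_enlargement_closedBall
    (E : Set (ι → ℤ)) id (fun e => (r e : ℝ)) (E.sup r : ℕ)
    (fun e he => Nat.cast_le.2 (Finset.le_sup (Finset.mem_coe.1 he))) 5 (by norm_num)
  obtain ⟨U, rfl⟩ := (E.finite_toSet.subset huE).exists_finset_coe
  refine ⟨U, Finset.coe_subset.1 huE, fun a ha b hb hab => ?_, ?_⟩
  · rw [Function.onFun, ← Finset.disjoint_coe, coe_map_cube, coe_map_cube]
    exact hdisj ha hb hab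
  have hsub : E ⊆ U.biUnion fun e => (cube ι (5 * r e)).map (addRightEmbedding e) := by
    intro e he
    obtain ⟨b, hb, hball⟩ := hcover e he
    refine Finset.mem_biUnion.2 ⟨b, hb, ?_⟩
    rw [← Finset.mem_coe, coe_map_cube, Nat.cast_mul]
    exact hball (Metric.mem_closedBall_self (r e).cast_nonneg)
  calc #E ≤ ∑ e ∈ U, #((cube ι (5 * r e)).map (addRightEmbedding e)) :=
        (Finset.card_le_card hsub).trans Finset.card_biUnion_le
    _ ≤ ∑ e ∈ U, 5 ^ Fintype.card ι * #(cube ι (r e)) :=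
        Finset.sum_le_sum fun e _ => by
          rw [Finset.card_map]
          exact card_cube_five_mul_le ι (r e)
    _ = 5 ^ Fintype.card ι * ∑ e ∈ U, #(cube ι (r e)) := (Finset.mul_sum _ _ _).symm

lemma mul_card_le_sum_cube {φ : (ι → ℤ) → ℝ≥0∞} {t : ℝ≥0∞} {L : ℕ} {E : Finset (ι → ℤ)}
    (hE : E ⊆ cube ι L)
    (h : ∀ e ∈ E, ∃ r ≤ L, t * #(cube ι r) ≤ ∑ n ∈ cube ι r, φ (n + e)) :
    t * #E ≤ 5 ^ Fintype.card ι * ∑ n ∈ cube ι (2 * L), φ n := by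
  choose! r hrL hr using h
  obtain ⟨U, hUE, hdisj, hcard⟩ := exists_pairwiseDisjoint_map_cube E r
  calc t * (#E : ℝ≥0∞)
      ≤ t * ((5 ^ Fintype.card ι * ∑ e ∈ U, #(cube ι (r e)) : ℕ) : ℝ≥0∞) := by gcongr
    _ = 5 ^ Fintype.card ι * ∑ e ∈ U, t * #(cube ι (r e)) := by
        push_cast
        rw [← Finset.mul_sum, mul_left_comm]
    _ ≤ 5 ^ Fintype.card ι * ∑ e ∈ U, ∑ n ∈ (cube ι (r e)).map (addRightEmbedding e), φ n := by
        gcongr with e he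
        rw [Finset.sum_map]
        exact hr e (hUE he)
    _ = 5 ^ Fintype.card ι *
          ∑ n ∈ U.biUnion fun e => (cube ι (r e)).map (addRightEmbedding e), φ n := by
        rw [Finset.sum_biUnion hdisj]
    _ ≤ 5 ^ Fintype.card ι * ∑ n ∈ cube ι (2 * L), φ n := by
        gcongr
        refine Finset.biUnion_subset.2 fun e he => (map_cube_subset (hE (hUE he)) _).trans ?_
        exact cube_mono (by linarith [hrL e (hUE he)])

end Cubes

section Averages

variable {ι E : Type*} [Fintype ι] [DecidableEq ι] [NormedAddCommGroup E] [NormedSpace ℝ E]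

/-- The average of `φ` over the cube `⟦-N, N⟧^ι`. -/
def cubeAverage (N : ℕ) (φ : (ι → ℤ) → E) : E := (#(cube ι N) : ℝ)⁻¹ • ∑ n ∈ cube ι N, φ n

lemma cubeAverage_const (N : ℕ) (c : E) : cubeAverage N (fun _ : ι → ℤ => c) = c := by
  rw [cubeAverage, Finset.sum_const, ← Nat.cast_smul_eq_nsmul ℝ,
    inv_smul_smul₀ (Nat.cast_ne_zero.2 (card_cube_pos ι N).ne')]

lemma cubeAverage_sub (N : ℕ) (φ ψ : (ι → ℤ) → E) :
    cubeAverage N (fun n => φ n - ψ n) = cubeAverage N φ - cubeAverage N ψ := by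
  simp only [cubeAverage, Finset.sum_sub_distrib, smul_sub]

lemma cubeAverage_add (N : ℕ) (φ ψ : (ι → ℤ) → E) :
    cubeAverage N (fun n => φ n + ψ n) = cubeAverage N φ + cubeAverage N ψ := by
  simp only [cubeAverage, Finset.sum_add_distrib, smul_add]

lemma cubeAverage_smul {𝕜 : Type*} [Monoid 𝕜] [DistribMulAction 𝕜 E] [SMulCommClass ℝ 𝕜 E]
    (N : ℕ) (c : 𝕜) (φ : (ι → ℤ) → E) :
    cubeAverage N (fun n => c • φ n) = c • cubeAverage N φ := by
  rw [cubeAverage, cubeAverage, ← Finset.smul_sum, smul_comm]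

lemma norm_cubeAverage_le {φ : (ι → ℤ) → E} {C : ℝ} (hφ : ∀ n, ‖φ n‖ ≤ C) (N : ℕ) :
    ‖cubeAverage N φ‖ ≤ C := by
  rw [cubeAverage, norm_smul, norm_inv, Real.norm_natCast,
    inv_mul_le_iff₀ (Nat.cast_pos.2 (card_cube_pos ι N)), ← nsmul_eq_mul]
  exact (norm_sum_le_of_le _ fun n _ => hφ n).trans_eq (Finset.sum_const C)

lemma enorm_cubeAverage_le (N : ℕ) (φ : (ι → ℤ) → E) :
    ‖cubeAverage N φ‖ₑ ≤ (∑ n ∈ cube ι N, ‖φ n‖ₑ) / #(cube ι N) := by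
  have hcard : (#(cube ι N) : ℝ) ≠ 0 := Nat.cast_ne_zero.2 (card_cube_pos ι N).ne'
  rw [cubeAverage, enorm_smul, enorm_inv hcard, Real.enorm_natCast, mul_comm, ← div_eq_mul_inv]
  gcongr
  exact enorm_sum_le _ _

lemma aestronglyMeasurable_cubeAverage {X : Type*} [MeasurableSpace X] {μ : Measure X}
    {g : (ι → ℤ) → X → E} (hg : ∀ n, AEStronglyMeasurable (g n) μ) (N : ℕ) :
    AEStronglyMeasurable (fun x => cubeAverage N fun n => g n x) μ :=
  (Finset.aestronglyMeasurable_fun_sum _ fun n _ => hg n).const_smul _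

lemma tendsto_cubeAverage_translate_sub {φ : (ι → ℤ) → E} {C : ℝ} (hφ : ∀ n, ‖φ n‖ ≤ C)
    (e : ι → ℤ) :
    Tendsto (fun N => cubeAverage N (fun n => φ (n + e)) - cubeAverage N φ) atTop (𝓝 0) := by
  obtain ⟨k, hk⟩ := exists_nat_ge ‖e‖
  have hzero :
      Tendsto (fun N => 2 * C * (#(cube ι (N + k)) / #(cube ι N) - 1 : ℝ)) atTop (𝓝 0) := by
    simpa only [sub_self, mul_zero] using
      ((tendsto_card_cube_add_div ι k).sub_const 1).const_mul (2 * C)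
  refine squeeze_zero_norm (fun N => ?_) hzero
  have hcard : (0 : ℝ) < #(cube ι N) := Nat.cast_pos.2 (card_cube_pos ι N)
  have hsdiff : ∀ s ⊆ cube ι (N + k), #s = #(cube ι N) →
      ‖∑ n ∈ cube ι (N + k), φ n - ∑ n ∈ s, φ n‖ ≤ (#(cube ι (N + k)) - #(cube ι N)) * C := by
    intro s hs hs_card
    rw [← Finset.sum_sdiff_eq_sub hs, ← hs_card, ← Finset.cast_card_sdiff hs, ← nsmul_eq_mul]
    exact (norm_sum_le_of_le _ fun n _ => hφ n).trans_eq (Finset.sum_const C)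
  have hshift := hsdiff _ (map_cube_subset (mem_cube.2 hk) N) (Finset.card_map _)
  have hself := hsdiff _ (cube_mono (Nat.le_add_right N k)) rfl
  rw [Finset.sum_map] at hshift
  rw [cubeAverage, cubeAverage, ← smul_sub, norm_smul, norm_inv, Real.norm_natCast,
    inv_mul_le_iff₀ hcard]
  calc _ ≤ (#(cube ι (N + k)) - #(cube ι N)) * C + (#(cube ι (N + k)) - #(cube ι N)) * C := by
        rw [← sub_sub_sub_cancel_left _ _ (∑ n ∈ cube ι (N + k), φ n)]
        exact (norm_sub_le _ _).trans (add_le_add hself hshift)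
    _ = #(cube ι N) * (2 * C * (#(cube ι (N + k)) / #(cube ι N) - 1)) := by
        field_simp
        ring

lemma tendsto_cubeAverage_zero_of_eigen {𝕜 : Type*} [NormedField 𝕜] [NormedSpace 𝕜 E]
    [SMulCommClass ℝ 𝕜 E] {φ : (ι → ℤ) → E} {C : ℝ} (hφ : ∀ n, ‖φ n‖ ≤ C) {e : ι → ℤ} {z : 𝕜}
    (hz : z ≠ 1) (he : ∀ n, φ (n + e) = z • φ n) :
    Tendsto (fun N => cubeAverage N φ) atTop (𝓝 0) := by
  have hsub := (tendsto_cubeAverage_translate_sub hφ e).const_smul (z - 1)⁻¹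
  rw [smul_zero] at hsub
  refine hsub.congr fun N => ?_
  simp only [he]
  rw [cubeAverage_smul, ← one_smul 𝕜 (cubeAverage N φ), smul_smul, mul_one, ← sub_smul, one_smul,
    inv_smul_smul₀ (sub_ne_zero.2 hz)]

end Averages

section InvariantMeasure

variable {G X : Type*} [AddGroup G] [AddAction G X] [MeasurableSpace X] {μ : Measure X}
  [MeasurableConstVAdd G X] [VAddInvariantMeasure G X μ] {F : X → ℝ≥0∞}

lemma aemeasurable_comp_vadd (hF : AEMeasurable F μ) (g : G) :
    AEMeasurable (fun x => F (g +ᵥ x)) μ :=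
  hF.comp_quasiMeasurePreserving (measurePreserving_vadd g μ).quasiMeasurePreserving

lemma lintegral_sum_vadd (hF : AEMeasurable F μ) (s : Finset G) :
    ∫⁻ x, ∑ g ∈ s, F (g +ᵥ x) ∂μ = #s * ∫⁻ x, F x ∂μ := by
  have hinv (g : G) : ∫⁻ x, F (g +ᵥ x) ∂μ = ∫⁻ x, F x ∂μ := by
    have hg := measurePreserving_vadd g μ
    rw [← lintegral_map' (hg.map_eq.symm ▸ hF) hg.aemeasurable, hg.map_eq]
  rw [lintegral_finsetSum' _ fun g _ => aemeasurable_comp_vadd hF g]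
  simp only [hinv, Finset.sum_const, nsmul_eq_mul]

end InvariantMeasure

section ErgodicAverages

variable {ι X E : Type*} [Fintype ι] [DecidableEq ι] [NormedAddCommGroup E] [NormedSpace ℝ E]

/-- The maximal function of a nonnegative family: the supremum of its averages over the cubes
`⟦-N, N⟧^ι`. -/
def cubeMaximal (φ : (ι → ℤ) → ℝ≥0∞) : ℝ≥0∞ := ⨆ N, (∑ n ∈ cube ι N, φ n) / #(cube ι N)

lemma enorm_cubeAverage_le_cubeMaximal (N : ℕ) (φ : (ι → ℤ) → E) :
    ‖cubeAverage N φ‖ₑ ≤ cubeMaximal fun n => ‖φ n‖ₑ :=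
  (enorm_cubeAverage_le N φ).trans <| le_iSup (fun N => (∑ n ∈ cube ι N, ‖φ n‖ₑ) / #(cube ι N)) N

variable [AddAction (ι → ℤ) X] [MeasurableSpace X] {μ : Measure X} {f g : X → E}

lemma enorm_cubeAverage_sub_integral_le (hf : Integrable f μ) (hg : Integrable g μ) (N : ℕ)
    (x : X) :
    ‖cubeAverage N (fun n : ι → ℤ => f (n +ᵥ x)) - ∫ x, f x ∂μ‖ₑ ≤
      ‖cubeAverage N fun n : ι → ℤ => f (n +ᵥ x) - g (n +ᵥ x)‖ₑ +
        (‖cubeAverage N (fun n : ι → ℤ => g (n +ᵥ x)) - ∫ x, g x ∂μ‖ₑ +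
          ∫⁻ x, ‖f x - g x‖ₑ ∂μ) := by
  have hintegral : ‖∫ x, f x ∂μ - ∫ x, g x ∂μ‖ₑ ≤ ∫⁻ x, ‖f x - g x‖ₑ ∂μ := by
    rw [← integral_sub hf hg]
    exact enorm_integral_le_lintegral_enorm _
  calc _ = ‖cubeAverage N (fun n : ι → ℤ => f (n +ᵥ x) - g (n +ᵥ x)) +
        ((cubeAverage N (fun n : ι → ℤ => g (n +ᵥ x)) - ∫ x, g x ∂μ) -
          (∫ x, f x ∂μ - ∫ x, g x ∂μ))‖ₑ := by
        rw [cubeAverage_sub]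
        congr 1
        abel
    _ ≤ _ := (enorm_add_le _ _).trans <| by
        gcongr
        exact enorm_sub_le.trans (by gcongr)

lemma limsup_enorm_cubeAverage_sub_integral_le (hf : Integrable f μ) (hg : Integrable g μ) {x : X}
    (hx : Tendsto (fun N => cubeAverage N fun n : ι → ℤ => g (n +ᵥ x)) atTop (𝓝 (∫ x, g x ∂μ))) :
    limsup (fun N => ‖cubeAverage N (fun n : ι → ℤ => f (n +ᵥ x)) - ∫ x, f x ∂μ‖ₑ) atTop ≤
      (cubeMaximal fun n : ι → ℤ => ‖f (n +ᵥ x) - g (n +ᵥ x)‖ₑ) + ∫⁻ x, ‖f x - g x‖ₑ ∂μ := by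
  set M := cubeMaximal fun n : ι → ℤ => ‖f (n +ᵥ x) - g (n +ᵥ x)‖ₑ
  have hbound : Tendsto (fun N => M +
      (‖cubeAverage N (fun n : ι → ℤ => g (n +ᵥ x)) - ∫ x, g x ∂μ‖ₑ +
        ∫⁻ x, ‖f x - g x‖ₑ ∂μ)) atTop (𝓝 (M + (0 + ∫⁻ x, ‖f x - g x‖ₑ ∂μ))) := by
    refine tendsto_const_nhds.add (.add ?_ tendsto_const_nhds)
    simpa only [sub_self, enorm_zero] using (hx.sub_const (∫ x, g x ∂μ)).enorm
  rw [← zero_add (∫⁻ x, ‖f x - g x‖ₑ ∂μ), ← hbound.limsup_eq]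
  refine limsup_le_limsup (.of_forall fun N => ?_)
  refine (enorm_cubeAverage_sub_integral_le hf hg N x).trans ?_
  exact add_le_add (enorm_cubeAverage_le_cubeMaximal N _) le_rfl

variable [MeasurableConstVAdd (ι → ℤ) X] [VAddInvariantMeasure (ι → ℤ) X μ] {F : X → ℝ≥0∞}

lemma mul_measure_exists_le_mul_le (hF : AEMeasurable F μ) (t : ℝ≥0∞) (L : ℕ) :
    t * μ {x | ∃ r ≤ L, t * #(cube ι r) ≤ ∑ n ∈ cube ι r, F (n +ᵥ x)} ≤
      10 ^ Fintype.card ι * ∫⁻ x, F x ∂μ := by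
  classical
  set B := {x | ∃ r ≤ L, t * #(cube ι r) ≤ ∑ n ∈ cube ι r, F (n +ᵥ x)} with hB
  have hBmeas : NullMeasurableSet B μ := by
    have hBunion : B = ⋃ r ∈ Set.Iic L, {x | t * #(cube ι r) ≤ ∑ n ∈ cube ι r, F (n +ᵥ x)} := by
      ext x
      simp only [hB, Set.mem_ofPred_eq, Set.mem_iUnion, Set.mem_Iic, exists_prop]
    rw [hBunion]
    exact .biUnion (Set.to_countable _) fun r _ => nullMeasurableSet_le aemeasurable_const <|
      Finset.aemeasurable_fun_sum _ fun n _ => aemeasurable_comp_vadd hF n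
  have hpointwise (x : X) : t * ∑ e ∈ cube ι L, B.indicator 1 (e +ᵥ x) ≤
      5 ^ Fintype.card ι * ∑ n ∈ cube ι (2 * L), F (n +ᵥ x) := by
    have hvisits := mul_card_le_sum_cube (φ := fun n => F (n +ᵥ x)) (t := t)
      (Finset.filter_subset (fun e : ι → ℤ => e +ᵥ x ∈ B) (cube ι L)) fun e he => by
        obtain ⟨r, hr, hle⟩ := (Finset.mem_filter.1 he).2
        exact ⟨r, hr, by simpa only [add_vadd] using hle⟩
    simp only [Set.indicator_apply, Pi.one_apply]
    rwa [Finset.sum_boole]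
  have hcard : (#(cube ι L) : ℝ≥0∞) ≠ 0 := Nat.cast_ne_zero.2 (card_cube_pos ι L).ne'
  refine (ENNReal.mul_le_mul_iff_right hcard (ENNReal.natCast_ne_top _)).1 ?_
  have hind : AEMeasurable (B.indicator (1 : X → ℝ≥0∞)) μ := aemeasurable_one.indicator₀ hBmeas
  calc #(cube ι L) * (t * μ B) = ∫⁻ x, t * ∑ e ∈ cube ι L, B.indicator 1 (e +ᵥ x) ∂μ := by
        rw [lintegral_const_mul'' _ (Finset.aemeasurable_fun_sum _ fun n _ =>
          aemeasurable_comp_vadd hind n), lintegral_sum_vadd hind, lintegral_indicator_one₀ hBmeas,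
          mul_left_comm]
    _ ≤ ∫⁻ x, 5 ^ Fintype.card ι * ∑ n ∈ cube ι (2 * L), F (n +ᵥ x) ∂μ :=
        lintegral_mono hpointwise
    _ = ((5 ^ Fintype.card ι * #(cube ι (2 * L)) : ℕ) : ℝ≥0∞) * ∫⁻ x, F x ∂μ := by
        rw [lintegral_const_mul'' _ (Finset.aemeasurable_fun_sum _ fun n _ =>
          aemeasurable_comp_vadd hF n), lintegral_sum_vadd hF, ← mul_assoc]
        push_cast
        rfl
    _ ≤ ((5 ^ Fintype.card ι * (2 ^ Fintype.card ι * #(cube ι L)) : ℕ) : ℝ≥0∞) *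
          ∫⁻ x, F x ∂μ := by
        gcongr
        exact card_cube_two_mul_le ι L
    _ = #(cube ι L) * (10 ^ Fintype.card ι * ∫⁻ x, F x ∂μ) := by
        rw [← mul_assoc, ← mul_pow]
        push_cast
        ring

lemma mul_measure_lt_cubeMaximal_le (hF : AEMeasurable F μ) (t : ℝ≥0∞) :
    t * μ {x | t < cubeMaximal fun n : ι → ℤ => F (n +ᵥ x)} ≤
      10 ^ Fintype.card ι * ∫⁻ x, F x ∂μ := by
  set B : ℕ → Set X := fun L => {x | ∃ r ≤ L, t * #(cube ι r) ≤ ∑ n ∈ cube ι r, F (n +ᵥ x)}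
  have hB : Monotone B := fun L M hLM x ⟨r, hr, hx⟩ => ⟨r, hr.trans hLM, hx⟩
  have hsub : {x | t < cubeMaximal fun n : ι → ℤ => F (n +ᵥ x)} ⊆ ⋃ L, B L := by
    intro x hx
    obtain ⟨r, hr⟩ := lt_iSup_iff.1 (Set.mem_ofPred_eq ▸ hx)
    exact Set.mem_iUnion.2 ⟨r, r, le_rfl, ENNReal.mul_le_of_le_div hr.le⟩
  calc _ ≤ t * μ (⋃ L, B L) := by gcongr
    _ = ⨆ L, t * μ (B L) := by rw [hB.measure_iUnion, ENNReal.mul_iSup]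
    _ ≤ _ := iSup_le fun L => mul_measure_exists_le_mul_le hF t L

-- The Banach principle: the maximal inequality makes a.e. convergence an `L¹`-closed property.
lemma ae_tendsto_cubeAverage_of_dense (hf : Integrable f μ)
    (h : ∀ ε ≠ 0, ∃ g, Integrable g μ ∧ ∫⁻ x, ‖f x - g x‖ₑ ∂μ ≤ ε ∧
      ∀ᵐ x ∂μ, Tendsto (fun N => cubeAverage N fun n : ι → ℤ => g (n +ᵥ x)) atTop
        (𝓝 (∫ x, g x ∂μ))) :
    ∀ᵐ x ∂μ, Tendsto (fun N => cubeAverage N fun n : ι → ℤ => f (n +ᵥ x)) atTop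
      (𝓝 (∫ x, f x ∂μ)) := by
  set Ω : X → ℝ≥0∞ := fun x => limsup (fun N =>
    ‖cubeAverage N (fun n : ι → ℤ => f (n +ᵥ x)) - ∫ x, f x ∂μ‖ₑ) atTop
  suffices hΩ : ∀ᵐ x ∂μ, Ω x ≤ 0 by
    filter_upwards [hΩ] with x hx
    rw [tendsto_iff_edist_tendsto_0]
    simp only [edist_eq_enorm_sub]
    exact tendsto_of_le_liminf_of_limsup_le zero_le hx
  refine (ae_le_const_iff_forall_gt_measure_zero Ω 0).2 fun s hs => ?_
  obtain ⟨s', hs', hs's⟩ := exists_between hs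
  have ht : 0 < s' / 2 := ENNReal.half_pos hs'.ne'
  suffices hsmall : ∀ a > 0, s' / 2 * μ {x | s ≤ Ω x} ≤ a from
    (mul_eq_zero.1 (le_zero_iff.1 (le_of_forall_gt_imp_ge_of_dense hsmall))).resolve_left ht.ne'
  intro a ha
  have hε : 0 < min (a / 10 ^ Fintype.card ι) (s' / 2) :=
    lt_min (ENNReal.div_pos ha.ne' (by finiteness)) ht
  obtain ⟨g, hg, hfg, hlim⟩ := h _ hε.ne'
  have hle : {x | s ≤ Ω x} ≤ᵐ[μ]
      {x | s' / 2 < cubeMaximal fun n : ι → ℤ => ‖f (n +ᵥ x) - g (n +ᵥ x)‖ₑ} := by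
    filter_upwards [hlim] with x hx hsx
    by_contra! hmax
    refine absurd (hs's.trans_le hsx) (not_lt.2 ?_)
    calc Ω x ≤ _ := limsup_enorm_cubeAverage_sub_integral_le hf hg hx
      _ ≤ s' / 2 + s' / 2 := add_le_add (not_lt.1 hmax) (hfg.trans (min_le_right _ _))
      _ = s' := ENNReal.add_halves s'
  calc s' / 2 * μ {x | s ≤ Ω x} ≤ s' / 2 * μ _ :=
        mul_le_mul' le_rfl (measure_mono_ae hle)
    _ ≤ 10 ^ Fintype.card ι * ∫⁻ x, ‖f x - g x‖ₑ ∂μ :=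
        mul_measure_lt_cubeMaximal_le (hf.sub hg).aestronglyMeasurable.enorm _
    _ ≤ 10 ^ Fintype.card ι * (a / 10 ^ Fintype.card ι) := by
        gcongr
        exact hfg.trans (min_le_left _ _)
    _ ≤ a := ENNReal.mul_div_le

lemma aestronglyMeasurable_cubeAverage_vadd (hf : AEStronglyMeasurable f μ) (N : ℕ) :
    AEStronglyMeasurable (fun x => cubeAverage N fun n : ι → ℤ => f (n +ᵥ x)) μ :=
  aestronglyMeasurable_cubeAverage (fun n => hf.comp_quasiMeasurePreserving
    (measurePreserving_vadd n μ).quasiMeasurePreserving) N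

lemma lintegral_enorm_cubeAverage_le (hf : AEStronglyMeasurable f μ) (N : ℕ) :
    ∫⁻ x, ‖cubeAverage N fun n : ι → ℤ => f (n +ᵥ x)‖ₑ ∂μ ≤ ∫⁻ x, ‖f x‖ₑ ∂μ := by
  have hcard : (#(cube ι N) : ℝ≥0∞) ≠ 0 := Nat.cast_ne_zero.2 (card_cube_pos ι N).ne'
  calc _ ≤ ∫⁻ x, (∑ n ∈ cube ι N, ‖f (n +ᵥ x)‖ₑ) / #(cube ι N) ∂μ :=
        lintegral_mono fun x => enorm_cubeAverage_le N _
    _ = (#(cube ι N) * ∫⁻ x, ‖f x‖ₑ ∂μ) / #(cube ι N) := by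
        simp only [div_eq_mul_inv]
        rw [lintegral_mul_const' _ _ (ENNReal.inv_ne_top.2 hcard), lintegral_sum_vadd hf.enorm]
    _ = ∫⁻ x, ‖f x‖ₑ ∂μ := by
        rw [mul_comm, ENNReal.mul_div_cancel_right hcard (ENNReal.natCast_ne_top _)]

lemma tendsto_lintegral_cubeAverage_of_dense [IsProbabilityMeasure μ] (hf : Integrable f μ)
    (h : ∀ ε ≠ 0, ∃ g, Integrable g μ ∧ ∫⁻ x, ‖f x - g x‖ₑ ∂μ ≤ ε ∧
      Tendsto (fun N => ∫⁻ x, ‖cubeAverage N (fun n : ι → ℤ => g (n +ᵥ x)) - ∫ x, g x ∂μ‖ₑ ∂μ)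
        atTop (𝓝 0)) :
    Tendsto (fun N => ∫⁻ x, ‖cubeAverage N (fun n : ι → ℤ => f (n +ᵥ x)) - ∫ x, f x ∂μ‖ₑ ∂μ)
      atTop (𝓝 0) := by
  refine tendsto_of_le_liminf_of_limsup_le zero_le (le_of_forall_gt_imp_ge_of_dense fun a ha => ?_)
  obtain ⟨g, hg, hfg, hlim⟩ := h (a / 2) (ENNReal.half_pos ha.ne').ne'
  have hbound := (hlim.add_const (a / 2)).const_add (a / 2)
  rw [zero_add, ENNReal.add_halves] at hbound
  rw [← hbound.limsup_eq]
  refine limsup_le_limsup (.of_forall fun N => ?_)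
  have hfg_meas : AEStronglyMeasurable (fun x => f x - g x) μ := (hf.sub hg).aestronglyMeasurable
  calc _ ≤ ∫⁻ x, (‖cubeAverage N fun n : ι → ℤ => f (n +ᵥ x) - g (n +ᵥ x)‖ₑ +
          (‖cubeAverage N (fun n : ι → ℤ => g (n +ᵥ x)) - ∫ x, g x ∂μ‖ₑ +
            ∫⁻ x, ‖f x - g x‖ₑ ∂μ)) ∂μ :=
        lintegral_mono fun x => enorm_cubeAverage_sub_integral_le hf hg N x
    _ = ∫⁻ x, ‖cubeAverage N fun n : ι → ℤ => f (n +ᵥ x) - g (n +ᵥ x)‖ₑ ∂μ +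
          (∫⁻ x, ‖cubeAverage N (fun n : ι → ℤ => g (n +ᵥ x)) - ∫ x, g x ∂μ‖ₑ ∂μ +
            ∫⁻ x, ‖f x - g x‖ₑ ∂μ) := by
        rw [lintegral_add_left' (aestronglyMeasurable_cubeAverage_vadd hfg_meas N).enorm,
          lintegral_add_right _ measurable_const, lintegral_const, measure_univ, mul_one]
    _ ≤ _ := add_le_add ((lintegral_enorm_cubeAverage_le hfg_meas N).trans hfg)
        (add_le_add le_rfl hfg)

lemma tendsto_lintegral_cubeAverage_of_bounded [IsFiniteMeasure μ] {C : ℝ}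
    (hg : AEStronglyMeasurable g μ) (hC : ∀ x, ‖g x‖ ≤ C) {c : E}
    (hlim : ∀ᵐ x ∂μ, Tendsto (fun N => cubeAverage N fun n : ι → ℤ => g (n +ᵥ x)) atTop (𝓝 c)) :
    Tendsto (fun N => ∫⁻ x, ‖cubeAverage N (fun n : ι → ℤ => g (n +ᵥ x)) - c‖ₑ ∂μ)
      atTop (𝓝 0) := by
  have hbound (N : ℕ) (x : X) :
      ‖cubeAverage N (fun n : ι → ℤ => g (n +ᵥ x)) - c‖ₑ ≤ ENNReal.ofReal (C + ‖c‖) := by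
    rw [← ofReal_norm]
    gcongr
    exact (norm_sub_le _ _).trans (by gcongr; exact norm_cubeAverage_le (fun n => hC _) N)
  have hdom := tendsto_lintegral_of_dominated_convergence' (μ := μ) (f := fun _ => 0)
    (fun _ => ENNReal.ofReal (C + ‖c‖))
    (fun N => ((aestronglyMeasurable_cubeAverage_vadd hg N).sub aestronglyMeasurable_const).enorm)
    (fun N => .of_forall (hbound N)) (by rw [lintegral_const]; finiteness) <| by
      filter_upwards [hlim] with x hx
      simpa only [sub_self, enorm_zero, Pi.sub_apply] using (hx.sub_const c).enorm
  rwa [lintegral_zero] at hdom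

end ErgodicAverages

section Torus

open UnitAddTorus

variable {ι d : Type*} [Fintype ι] [DecidableEq ι] [Fintype d]

instance : IsProbabilityMeasure (volume : Measure UnitAddCircle) := ⟨UnitAddCircle.measure_univ⟩

lemma mFourier_apply_add (m : d → ℤ) (x y : UnitAddTorus d) :
    mFourier m (x + y) = mFourier m x * mFourier m y := by
  simp only [mFourier, ContinuousMap.coe_mk, ← Finset.prod_mul_distrib, Pi.add_apply,
    fourier_apply, smul_add, AddCircle.toCircle_add, Circle.coe_mul]

lemma norm_mFourier_apply (m : d → ℤ) (x : UnitAddTorus d) : ‖mFourier m x‖ = 1 := by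
  simp only [mFourier, fourier_apply, ContinuousMap.coe_mk, norm_prod, Circle.norm_coe,
    Finset.prod_const_one]

lemma integrable_continuousMap {E : Type*} [NormedAddCommGroup E] (g : C(UnitAddTorus d, E)) :
    Integrable g :=
  g.continuous.integrable_of_hasCompactSupport (HasCompactSupport.of_compactSpace g)

variable {a : (ι → ℤ) →+ UnitAddTorus d}

lemma tendsto_cubeAverage_mFourier (ha : ∀ m : d → ℤ, m ≠ 0 → ∃ n, mFourier m (a n) ≠ 1)
    (m : d → ℤ) (x : UnitAddTorus d) :
    Tendsto (fun N => cubeAverage N fun n => mFourier m (a n + x)) atTop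
      (𝓝 (∫ y, mFourier m y)) := by
  rcases eq_or_ne m 0 with rfl | hm
  · simp only [mFourier_zero, ContinuousMap.one_apply, cubeAverage_const, integral_const,
      probReal_univ, one_smul, tendsto_const_nhds]
  obtain ⟨e, he⟩ := ha m hm
  have hintegral : ∫ y, mFourier m y = 0 := by
    have hinv := integral_add_left_eq_self (μ := volume) (fun y => mFourier m y) (a e)
    simp only [mFourier_apply_add, integral_const_mul] at hinv
    exact (mul_left_eq_self₀.1 hinv).resolve_left he
  rw [hintegral]
  refine tendsto_cubeAverage_zero_of_eigen (fun n => (norm_mFourier_apply m _).le) he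
    (e := e) fun n => ?_
  rw [map_add a, add_comm (a n), add_assoc, mFourier_apply_add, smul_eq_mul]

lemma tendsto_cubeAverage_continuousMap (ha : ∀ m : d → ℤ, m ≠ 0 → ∃ n, mFourier m (a n) ≠ 1)
    (g : C(UnitAddTorus d, ℂ)) (x : UnitAddTorus d) :
    Tendsto (fun N => cubeAverage N fun n => g (a n + x)) atTop (𝓝 (∫ y, g y)) := by
  have hlip (N : ℕ) :
      LipschitzWith 1 fun g : C(UnitAddTorus d, ℂ) => cubeAverage N fun n => g (a n + x) := by
    refine LipschitzWith.of_dist_le_mul fun g h => ?_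
    rw [NNReal.coe_one, one_mul, dist_eq_norm, dist_eq_norm, ← cubeAverage_sub]
    exact norm_cubeAverage_le (fun n => (g - h).norm_coe_le_norm _) N
  have hcont : Continuous fun g : C(UnitAddTorus d, ℂ) => ∫ y, g y := by
    refine (LipschitzWith.of_dist_le_mul (K := 1) fun g h => ?_).continuous
    rw [NNReal.coe_one, one_mul, dist_eq_norm, dist_eq_norm,
      ← integral_sub (integrable_continuousMap g) (integrable_continuousMap h)]
    simpa only [probReal_univ, mul_one, ContinuousMap.sub_apply] using
      norm_integral_le_of_norm_le_const (μ := volume) (.of_forall (g - h).norm_coe_le_norm)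
  have hclosed := (LipschitzWith.uniformEquicontinuous _ 1 hlip).equicontinuous
    |>.isClosed_setOfPred_tendsto (l := atTop) hcont
  have hdense : g ∈ closure (Submodule.span ℂ (Set.range (mFourier (d := d))) : Set _) := by
    rw [← Submodule.topologicalClosure_coe, span_mFourier_closure_eq_top]
    trivial
  refine closure_minimal (fun p hp => ?_) hclosed hdense
  induction hp using Submodule.span_induction with
  | mem p hp =>
    obtain ⟨m, rfl⟩ := hp
    exact tendsto_cubeAverage_mFourier ha m x
  | zero =>
    simp only [Set.mem_ofPred_eq, ContinuousMap.zero_apply, cubeAverage_const, integral_zero,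
      tendsto_const_nhds]
  | add p q _ _ hp hq =>
    simpa only [Set.mem_ofPred_eq, ContinuousMap.add_apply, cubeAverage_add,
      integral_add (integrable_continuousMap p) (integrable_continuousMap q)] using hp.add hq
  | smul c p _ hp =>
    simpa only [Set.mem_ofPred_eq, ContinuousMap.smul_apply, cubeAverage_smul, integral_smul]
      using hp.const_smul c

lemma tendsto_cubeAverage_continuous_real
    (ha : ∀ m : d → ℤ, m ≠ 0 → ∃ n, mFourier m (a n) ≠ 1)
    {g : UnitAddTorus d → ℝ} (hg : Continuous g) (x : UnitAddTorus d) :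
    Tendsto (fun N => cubeAverage N fun n => g (a n + x)) atTop (𝓝 (∫ y, g y)) := by
  have hcomplex := tendsto_cubeAverage_continuousMap ha
    ⟨fun y => (g y : ℂ), Complex.continuous_ofReal.comp hg⟩ x
  rw [ContinuousMap.coe_mk, integral_complex_ofReal] at hcomplex
  refine ((Complex.continuous_re.tendsto _).comp hcomplex).congr fun N => ?_
  rw [Function.comp_apply, cubeAverage, cubeAverage, ← Complex.ofReal_sum, Complex.real_smul,
    ← Complex.ofReal_mul, Complex.ofReal_re, smul_eq_mul]

theorem torus_ergodic_theorem (ha : ∀ m : d → ℤ, m ≠ 0 → ∃ n, mFourier m (a n) ≠ 1)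
    {f : UnitAddTorus d → ℝ} (hf : Integrable f) :
    (∀ᵐ x, Tendsto (fun N => cubeAverage N fun n => f (a n + x)) atTop (𝓝 (∫ y, f y))) ∧
      Tendsto (fun N => ∫⁻ x, ‖cubeAverage N (fun n => f (a n + x)) - ∫ y, f y‖ₑ) atTop (𝓝 0) := by
  let _ : AddAction (ι → ℤ) (UnitAddTorus d) := AddAction.compHom _ a
  have : MeasurableConstVAdd (ι → ℤ) (UnitAddTorus d) := ⟨fun n => measurable_const_add (a n)⟩
  have : VAddInvariantMeasure (ι → ℤ) (UnitAddTorus d) volume :=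
    ⟨fun n s _ => measure_preimage_add volume (a n) s⟩
  have hweyl {g : UnitAddTorus d → ℝ} (hg : Continuous g) (x : UnitAddTorus d) :
      Tendsto (fun N => cubeAverage N fun n : ι → ℤ => g (n +ᵥ x)) atTop (𝓝 (∫ y, g y)) :=
    tendsto_cubeAverage_continuous_real ha hg x
  constructor
  · refine ae_tendsto_cubeAverage_of_dense hf fun ε hε => ?_
    obtain ⟨g, -, hfg, hg, hg_int⟩ := hf.exists_hasCompactSupport_lintegral_sub_le hε
    exact ⟨g, hg_int, hfg, .of_forall (hweyl hg)⟩
  · refine tendsto_lintegral_cubeAverage_of_dense hf fun ε hε => ?_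
    obtain ⟨g, -, hfg, hg, hg_int⟩ := hf.exists_hasCompactSupport_lintegral_sub_le hε
    exact ⟨g, hg_int, hfg, tendsto_lintegral_cubeAverage_of_bounded hg_int.aestronglyMeasurable
      (ContinuousMap.norm_coe_le_norm ⟨g, hg⟩) (.of_forall (hweyl hg))⟩

end Torus

section FundamentalDomains

variable {d : Type*}

/-- The covering map `ℝᵈ → ℝᵈ / ℤᵈ`. -/
def torusProj : (d → ℝ) →+ UnitAddTorus d where
  toFun x i := (x i : UnitAddCircle)
  map_zero' := rfl
  map_add' _ _ := rfl

/-- The representative in `[0, 1)ᵈ` of a point of `ℝᵈ / ℤᵈ`. -/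
def torusRep (y : UnitAddTorus d) : d → ℝ := fun i => (AddCircle.equivIco 1 0 (y i) : ℝ)

lemma torusProj_apply (x : d → ℝ) (i : d) : torusProj x i = (x i : UnitAddCircle) := rfl

lemma torusRep_torusProj {t : d → ℝ} (ht : t ∈ Set.univ.pi fun _ => Set.Ico (0 : ℝ) 1) :
    torusRep (torusProj t) = t := by
  funext i
  have hti : t i ∈ Set.Ico (0 : ℝ) (0 + 1) := by
    rw [zero_add]
    exact ht i trivial
  exact congrArg Subtype.val (AddCircle.equivIco_coe_eq hti)

lemma torusProj_intCast (n : d → ℤ) : torusProj (fun i => (n i : ℝ)) = 0 :=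
  funext fun i => (AddCircle.coe_eq_zero_iff 1).2 ⟨n i, by rw [zsmul_one]⟩

lemma measurable_torusProj : Measurable (torusProj (d := d)) :=
  measurable_pi_lambda _ fun i => AddCircle.measurable_mk'.comp (measurable_pi_apply i)

lemma measurable_torusRep : Measurable (torusRep (d := d)) :=
  measurable_pi_lambda _ fun i => measurable_subtype_coe.comp
    ((AddCircle.measurableEquivIco 1 0).measurable.comp (measurable_pi_apply i))

variable [Fintype d]

lemma measurePreserving_torusProj (t : d → ℝ) :
    MeasurePreserving torusProj
      (volume.restrict (Set.univ.pi fun i => Set.Ioc (t i) (t i + 1))) volume := by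
  have hpi := measurePreserving_pi _ _ fun i => UnitAddCircle.measurePreserving_mk (t i)
  rwa [← Measure.restrict_pi_pi] at hpi

lemma measurePreserving_torusRep :
    MeasurePreserving torusRep volume
      (volume.restrict (Set.univ.pi fun _ : d => Set.Ico (0 : ℝ) 1)) := by
  have hproj : MeasurePreserving torusProj
      (volume.restrict (Set.univ.pi fun _ : d => Set.Ico (0 : ℝ) 1)) volume := by
    have hae := (Measure.univ_pi_Ico_ae_eq_Icc (μ := fun _ : d => (volume : Measure ℝ))
      (f := fun _ => 0) (g := fun _ => 1)).trans Measure.univ_pi_Ioc_ae_eq_Icc.symm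
    rw [volume_pi, Measure.restrict_congr_set hae, ← volume_pi]
    simpa only [Pi.zero_apply, zero_add] using measurePreserving_torusProj (0 : d → ℝ)
  refine ⟨measurable_torusRep, ?_⟩
  rw [← hproj.map_eq, Measure.map_map measurable_torusRep measurable_torusProj,
    Measure.map_congr (g := id), Measure.map_id]
  exact (ae_restrict_mem (.univ_pi fun _ => measurableSet_Ico)).mono fun _ => torusRep_torusProj

lemma continuous_mulVec (M : Matrix d d ℝ) : Continuous fun x => M *ᵥ x :=
  continuous_const.matrix_mulVec continuous_id

variable [DecidableEq d] {M : Matrix d d ℝ}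

lemma inv_mulVec_mulVec (hM : IsUnit M.det) (v : d → ℝ) : M⁻¹ *ᵥ (M *ᵥ v) = v := by
  rw [mulVec_mulVec, nonsing_inv_mul _ hM, one_mulVec]

lemma mulVec_inv_mulVec (hM : IsUnit M.det) (v : d → ℝ) : M *ᵥ (M⁻¹ *ᵥ v) = v := by
  rw [mulVec_mulVec, mul_nonsing_inv _ hM, one_mulVec]

lemma closedBall_zero_subset_biUnion_cube (K : ℕ) :
    Metric.closedBall (0 : d → ℝ) K ⊆
      ⋃ k ∈ cube d (K + 1), Set.univ.pi fun i => Set.Ioc (k i : ℝ) (k i + 1) := by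
  intro x hx
  rw [mem_closedBall_zero_iff, pi_norm_le_iff_of_nonneg K.cast_nonneg] at hx
  refine Set.mem_iUnion₂.2 ⟨fun i => ⌈x i⌉ - 1, ?_, fun i _ => ?_⟩
  · rw [mem_cube, pi_norm_le_iff_of_nonneg (K + 1).cast_nonneg]
    intro i
    have hxi := abs_le.1 (hx i)
    have hlower := Int.le_ceil (x i)
    have hupper := Int.ceil_lt_add_one (x i)
    rw [Int.norm_eq_abs, abs_le]
    push_cast
    constructor <;> linarith
  · push_cast
    exact ⟨by linarith [Int.ceil_lt_add_one (x i)], by linarith [Int.le_ceil (x i)]⟩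

lemma map_torusProj_restrict_closedBall_le (K : ℕ) :
    (volume.restrict (Metric.closedBall (0 : d → ℝ) K)).map torusProj ≤
      (#(cube d (K + 1)) : ℝ≥0∞) • volume := by
  let P (k : d → ℤ) : Set (d → ℝ) := Set.univ.pi fun i => Set.Ioc (k i : ℝ) (k i + 1)
  calc (volume.restrict (Metric.closedBall (0 : d → ℝ) K)).map torusProj
      ≤ (volume.restrict (⋃ k ∈ cube d (K + 1), P k)).map torusProj :=
        Measure.map_mono (Measure.restrict_mono_set _ (closedBall_zero_subset_biUnion_cube K))
          measurable_torusProj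
    _ ≤ (Measure.sum fun k : cube d (K + 1) => volume.restrict (P k)).map torusProj :=
        Measure.map_mono (Measure.restrict_biUnion_le (Finset.countable_toSet _))
          measurable_torusProj
    _ = (#(cube d (K + 1)) : ℝ≥0∞) • volume := by
        rw [Measure.map_sum measurable_torusProj.aemeasurable]
        simp only [P, (measurePreserving_torusProj fun i => ((_ : d → ℤ) i : ℝ)).map_eq,
          Measure.sum_fintype, Finset.sum_const, Finset.card_univ, Fintype.card_coe]
        rw [Nat.cast_smul_eq_nsmul]

lemma exists_map_torusProj_restrict_le (hM : IsUnit M.det) {S : Set (d → ℝ)}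
    (hS : Bornology.IsBounded S) :
    ∃ C : ℝ≥0∞, C ≠ ⊤ ∧
      (volume.restrict S).map (fun x => torusProj (M *ᵥ x)) ≤ C • volume := by
  have hmeas : Measurable fun x => M *ᵥ x := (continuous_mulVec M).measurable
  obtain ⟨K, hK⟩ : ∃ K : ℕ, ∀ x ∈ S, M *ᵥ x ∈ Metric.closedBall 0 (K : ℝ) := by
    obtain ⟨r, hr⟩ :=
      (M.mulVecLin.toContinuousLinearMap.lipschitz.isBounded_image hS).exists_norm_le
    obtain ⟨K, hK⟩ := exists_nat_ge r
    exact ⟨K, fun x hx => mem_closedBall_zero_iff.2 ((hr _ ⟨x, hx, rfl⟩).trans hK)⟩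
  refine ⟨ENNReal.ofReal |M.det⁻¹| * #(cube d (K + 1)),
    ENNReal.mul_ne_top ENNReal.ofReal_ne_top (ENNReal.natCast_ne_top _), ?_⟩
  calc (volume.restrict S).map (fun x => torusProj (M *ᵥ x))
      ≤ (volume.restrict ((M *ᵥ ·) ⁻¹' Metric.closedBall 0 (K : ℝ))).map
          (fun x => torusProj (M *ᵥ x)) :=
        Measure.map_mono (Measure.restrict_mono_set _ hK)
          (measurable_torusProj.comp hmeas)
    _ = (((volume.map (M *ᵥ ·)).restrict (Metric.closedBall 0 (K : ℝ))).map torusProj) := by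
        rw [Measure.restrict_map hmeas Metric.isClosed_closedBall.measurableSet,
          Measure.map_map measurable_torusProj hmeas]
        rfl
    _ = ENNReal.ofReal |M.det⁻¹| •
          (volume.restrict (Metric.closedBall (0 : d → ℝ) K)).map torusProj := by
        rw [← Measure.map_smul, ← Measure.restrict_smul,
          ← Real.map_matrix_volume_pi_eq_smul_volume_pi hM.ne_zero]
        rfl
    _ ≤ _ := by
        rw [mul_smul]
        gcongr
        exact map_torusProj_restrict_closedBall_le K

end FundamentalDomains

section UnitCells

variable {M : Matrix (Fin 2) (Fin 2) ℝ}

lemma cell_eq_image (M : Matrix (Fin 2) (Fin 2) ℝ) :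
    cell M = (M *ᵥ ·) '' Set.univ.pi fun _ => Set.Ico (0 : ℝ) 1 :=
  Set.ext fun x => exists_congr fun t => and_congr (by rw [Set.mem_univ_pi]) eq_comm

lemma cell_eq_preimage (hM : IsUnit M.det) :
    cell M = (M⁻¹ *ᵥ ·) ⁻¹' Set.univ.pi fun _ => Set.Ico (0 : ℝ) 1 := by
  rw [cell_eq_image]
  exact congrFun (Set.image_eq_preimage_of_inverse (inv_mulVec_mulVec hM) (mulVec_inv_mulVec hM)) _

lemma isBounded_cell (M : Matrix (Fin 2) (Fin 2) ℝ) : Bornology.IsBounded (cell M) := by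
  rw [cell_eq_image]
  refine ((isCompact_univ_pi fun _ => isCompact_Icc (a := (0 : ℝ)) (b := 1)).image
    (continuous_mulVec M)).isBounded.subset (Set.image_mono ?_)
  exact Set.pi_mono fun _ _ => Set.Ico_subset_Icc_self

lemma measurePreserving_mulVec_torusRep (hM : IsUnit M.det) :
    MeasurePreserving (fun y => M *ᵥ torusRep y) volume
      ((volume.restrict (cell M) Set.univ)⁻¹ • volume.restrict (cell M)) := by
  have hmeas : Measurable fun x => M *ᵥ x := (continuous_mulVec M).measurable
  have hcomp : Measurable fun y => M *ᵥ torusRep y := hmeas.comp measurable_torusRep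
  have hcell : MeasurableSet (cell M) := by
    rw [cell_eq_preimage hM]
    exact (continuous_mulVec M⁻¹).measurable (.univ_pi fun _ => measurableSet_Ico)
  have hpre : (M *ᵥ ·) ⁻¹' cell M = Set.univ.pi fun _ => Set.Ico (0 : ℝ) 1 := by
    rw [cell_eq_image]
    exact Set.preimage_image_eq _ (Function.LeftInverse.injective (inv_mulVec_mulVec hM))
  have hmap : volume.map (fun y => M *ᵥ torusRep y) =
      ENNReal.ofReal |M.det⁻¹| • volume.restrict (cell M) := by
    rw [← Measure.restrict_smul, ← Real.map_matrix_volume_pi_eq_smul_volume_pi hM.ne_zero,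
      ← Function.comp_def (M *ᵥ ·) torusRep, ← Measure.map_map hmeas measurable_torusRep,
      measurePreserving_torusRep.map_eq, ← hpre, ← Measure.restrict_map hmeas hcell]
    rfl
  have hmass : ENNReal.ofReal |M.det⁻¹| * volume.restrict (cell M) Set.univ = 1 := by
    rw [← smul_eq_mul, ← Measure.smul_apply, ← hmap,
      Measure.map_apply hcomp .univ, Set.preimage_univ, measure_univ]
  exact ⟨hcomp, ENNReal.eq_inv_of_mul_eq_one_left hmass ▸ hmap⟩

lemma integrable_comp_mulVec_torusRep (hM : IsUnit M.det) {f : (Fin 2 → ℝ) → ℝ}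
    (hf : IntegrableOn f (cell M)) : Integrable fun y => f (M *ᵥ torusRep y) :=
  (measurePreserving_mulVec_torusRep hM).integrable_comp_of_integrable hf.to_average

lemma integral_mulVec_torusRep (hM : IsUnit M.det) {f : (Fin 2 → ℝ) → ℝ}
    (hf : IntegrableOn f (cell M)) : ∫ y, f (M *ᵥ torusRep y) = ⨍ x in cell M, f x := by
  have hmp := measurePreserving_mulVec_torusRep hM
  rw [average, ← hmp.map_eq, integral_map hmp.aemeasurable]
  rw [hmp.map_eq]
  exact hf.aestronglyMeasurable.smul_measure _

lemma mulVec_torusRep_torusProj (hM : IsUnit M.det) {x y : Fin 2 → ℝ} (hxy : x - y ∈ lat M)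
    (hy : y ∈ cell M) : M *ᵥ torusRep (torusProj (M⁻¹ *ᵥ x)) = y := by
  obtain ⟨n, hn⟩ := hxy
  obtain ⟨t, ht, rfl⟩ := hy
  have hx : M⁻¹ *ᵥ x = iv n + t := by
    rw [eq_add_of_sub_eq hn, ← mulVec_add, inv_mulVec_mulVec hM]
  have hn0 : torusProj (iv n) = 0 := torusProj_intCast n
  rw [hx, map_add, hn0, zero_add, torusRep_torusProj (Set.mem_univ_pi.2 ht)]

end UnitCells

section Incommensurability

variable {A B M : Matrix (Fin 2) (Fin 2) ℝ}

lemma iv_add (m n : Fin 2 → ℤ) : iv (m + n) = iv m + iv n :=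
  funext fun _ => Int.cast_add _ _

lemma iv_neg (m : Fin 2 → ℤ) : iv (-m) = -iv m :=
  funext fun _ => Int.cast_neg _

lemma iv_eq_zero_iff {m : Fin 2 → ℤ} : iv m = 0 ↔ m = 0 :=
  funext_iff.trans <| (forall_congr' fun _ => Int.cast_eq_zero).trans funext_iff.symm

lemma neg_mem_lat {v : Fin 2 → ℝ} (hv : v ∈ lat M) : -v ∈ lat M := by
  obtain ⟨n, rfl⟩ := hv
  exact ⟨-n, by rw [iv_neg, mulVec_neg]⟩

lemma add_mem_lat {v w : Fin 2 → ℝ} (hv : v ∈ lat M) (hw : w ∈ lat M) : v + w ∈ lat M := by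
  obtain ⟨m, rfl⟩ := hv
  obtain ⟨n, rfl⟩ := hw
  exact ⟨m + n, by rw [iv_add, mulVec_add]⟩

lemma lat_neg (M : Matrix (Fin 2) (Fin 2) ℝ) : lat (-M) = lat M := by
  ext v
  constructor <;> rintro ⟨n, rfl⟩ <;> refine ⟨-n, ?_⟩
  · rw [iv_neg, mulVec_neg, neg_mulVec]
  · rw [iv_neg, mulVec_neg, neg_mulVec, neg_neg]

lemma Incommensurate.symm (h : Incommensurate A B) : Incommensurate B A :=
  fun G₁ h₁ G₂ h₂ hG => (h G₂ h₂ G₁ h₁ (add_comm G₁ G₂ ▸ hG)).symm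

lemma Incommensurate.sub_right (h : Incommensurate A B) (hB : IsUnit B.det) :
    Incommensurate A (A - B) := by
  rintro G₁ hG₁ _ ⟨m, rfl⟩ hG
  rw [sub_mulVec] at hG
  obtain ⟨-, hBm⟩ := h (G₁ + A *ᵥ iv m) (add_mem_lat hG₁ ⟨m, rfl⟩) (-(B *ᵥ iv m))
    (neg_mem_lat ⟨m, rfl⟩) (by rw [← hG]; abel)
  have hm : iv m = 0 := eq_zero_of_mulVec_eq_zero hB.ne_zero (neg_eq_zero.1 hBm)
  rw [hm, mulVec_zero, mulVec_zero, sub_zero, add_zero] at hG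
  exact ⟨hG, by rw [hm, mulVec_zero]⟩

lemma Incommensurate.sub_left (h : Incommensurate A B) (hA : IsUnit A.det) :
    Incommensurate B (A - B) := by
  have hsub := h.symm.sub_right hA
  rwa [Incommensurate, ← neg_sub, lat_neg] at hsub

lemma isUnit_det_recip (hM : IsUnit M.det) : IsUnit (recip M).det := by
  rw [recip, det_smul, det_transpose]
  exact (IsUnit.pow _ (isUnit_iff_ne_zero.2 Real.two_pi_pos.ne')).mul (isUnit_nonsing_inv_det M hM)

lemma recip_recip (hM : IsUnit M.det) : recip (recip M) = M := by
  have hinv : (recip M)⁻¹ = (2 * π)⁻¹ • Mᵀ := by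
    refine inv_eq_left_inv ?_
    rw [recip, smul_mul_smul_comm, inv_mul_cancel₀ Real.two_pi_pos.ne', ← transpose_mul,
      nonsing_inv_mul M hM, transpose_one, one_smul]
  rw [recip, hinv, transpose_smul, transpose_transpose, smul_inv_smul₀ Real.two_pi_pos.ne']

lemma recip_mul_transpose (hA : IsUnit A.det) (M : Matrix (Fin 2) (Fin 2) ℝ) :
    recip A * (M⁻¹ * A)ᵀ = recip M := by
  rw [recip, recip, smul_mul, ← transpose_mul, mul_assoc, mul_nonsing_inv A hA, mul_one]

/-- The action of the lattice `B ℤ²` on `ℝ²/ℤ²` by translations, indexed by `ℤ²`. -/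
def latticeHom (B : Matrix (Fin 2) (Fin 2) ℝ) : (Fin 2 → ℤ) →+ UnitAddTorus (Fin 2) :=
  AddMonoidHom.mk' (fun n => torusProj (B *ᵥ iv n)) fun m n => by
    rw [iv_add, mulVec_add, map_add]

open UnitAddTorus in
lemma exists_int_eq_of_mFourier_torusProj_eq_one {d : Type*} [Fintype d] {m : d → ℤ} {v : d → ℝ}
    (h : mFourier m (torusProj v) = 1) : ∃ k : ℤ, (fun i => (m i : ℝ)) ⬝ᵥ v = k := by
  have hexp : mFourier m (torusProj v) =
      Complex.exp (((fun i => (m i : ℝ)) ⬝ᵥ v : ℝ) * (2 * π * Complex.I)) := by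
    simp only [mFourier, ContinuousMap.coe_mk, torusProj_apply,
      fourier_coe_apply, ← Complex.exp_sum, dotProduct, Complex.ofReal_sum, Finset.sum_mul]
    congr 1
    refine Finset.sum_congr rfl fun i _ => ?_
    push_cast
    ring
  rw [hexp, Complex.exp_eq_one_iff] at h
  obtain ⟨k, hk⟩ := h
  exact ⟨k, by exact_mod_cast mul_right_cancel₀ Complex.two_pi_I_ne_zero hk⟩

-- A character of `ℝ²/ℳ` trivial on the lattice of `A` is a common vector of the two
-- reciprocal lattices.
open UnitAddTorus in
lemma Incommensurate.exists_mFourier_latticeHom_ne_one (h : Incommensurate (recip A) (recip M))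
    (hA : IsUnit A.det) (hM : IsUnit M.det) {m : Fin 2 → ℤ} (hm : m ≠ 0) :
    ∃ n, mFourier m (latticeHom (M⁻¹ * A) n) ≠ 1 := by
  by_contra! htriv
  choose k hk using fun i =>
    exists_int_eq_of_mFourier_torusProj_eq_one (htriv (Pi.single i 1))
  have hmk : (M⁻¹ * A)ᵀ *ᵥ iv m = iv k := by
    funext i
    have hsingle : iv (Pi.single i 1) = Pi.single i 1 := by
      funext l
      rw [iv, Pi.single_apply, Pi.single_apply, Int.cast_ite, Int.cast_one, Int.cast_zero]
    rw [mulVec_transpose, ← show _ = iv k i from hk i, hsingle, mulVec_single_one]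
    rfl
  have hG : recip A *ᵥ iv k + -(recip M *ᵥ iv m) = 0 := by
    rw [← hmk, mulVec_mulVec, recip_mul_transpose hA, add_neg_cancel]
  obtain ⟨-, hzero⟩ := h _ ⟨k, rfl⟩ _ (neg_mem_lat ⟨m, rfl⟩) hG
  exact hm <| iv_eq_zero_iff.1 <|
    eq_zero_of_mulVec_eq_zero (isUnit_det_recip hM).ne_zero (neg_eq_zero.1 hzero)

end Incommensurability

section LatticeErgodicTheorem

variable {A M : Matrix (Fin 2) (Fin 2) ℝ} {frac : (Fin 2 → ℝ) → Fin 2 → ℝ} {f : (Fin 2 → ℝ) → ℝ}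
  {S : Set (Fin 2 → ℝ)}

lemma comp_frac_eq_torus (hM : IsUnit M.det)
    (hfrac : ∀ x, x - frac x ∈ lat M ∧ frac x ∈ cell M) (f : (Fin 2 → ℝ) → ℝ) (n : Fin 2 → ℤ)
    (x : Fin 2 → ℝ) :
    f (frac (A *ᵥ iv n + x)) =
      f (M *ᵥ torusRep (latticeHom (M⁻¹ * A) n + torusProj (M⁻¹ *ᵥ x))) := by
  rw [← mulVec_torusRep_torusProj hM (hfrac _).1 (hfrac _).2, mulVec_add, map_add, mulVec_mulVec]
  rfl

theorem lattice_ergodic_theorem (hA : IsUnit A.det) (hM : IsUnit M.det)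
    (h : Incommensurate (recip A) (recip M))
    (hfrac : ∀ x, x - frac x ∈ lat M ∧ frac x ∈ cell M) (hf : IntegrableOn f (cell M))
    (hS : Bornology.IsBounded S) :
    (∀ᵐ x ∂volume.restrict S, Tendsto (fun N => cubeAverage N fun n => f (frac (A *ᵥ iv n + x)))
        atTop (𝓝 (⨍ y in cell M, f y))) ∧
      Tendsto (fun N => ∫⁻ x in S,
        ‖cubeAverage N (fun n => f (frac (A *ᵥ iv n + x))) - ⨍ y in cell M, f y‖ₑ)
        atTop (𝓝 0) := by
  have hF := integrable_comp_mulVec_torusRep hM hf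
  obtain ⟨hae, hL1⟩ :=
    torus_ergodic_theorem (fun _ => h.exists_mFourier_latticeHom_ne_one hA hM) hF
  obtain ⟨C, hC, hle⟩ := exists_map_torusProj_restrict_le (isUnit_nonsing_inv_det M hM) hS
  have hproj : Measurable fun x => torusProj (M⁻¹ *ᵥ x) :=
    measurable_torusProj.comp (continuous_mulVec _).measurable
  have hac := Measure.absolutelyContinuous_of_le_smul hle
  simp only [comp_frac_eq_torus hM hfrac, ← integral_mulVec_torusRep hM hf]
  refine ⟨ae_of_ae_map hproj.aemeasurable (hac.ae_le hae), ?_⟩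
  refine tendsto_of_tendsto_of_tendsto_of_le_of_le tendsto_const_nhds
    (by simpa only [mul_zero] using ENNReal.Tendsto.const_mul hL1 (.inr hC))
    (fun _ => zero_le) fun N => ?_
  have hmeas : AEMeasurable fun y => ‖cubeAverage N
      (fun n => f (M *ᵥ torusRep (latticeHom (M⁻¹ * A) n + y))) - ∫ y, f (M *ᵥ torusRep y)‖ₑ :=
    ((aestronglyMeasurable_cubeAverage (fun n => (hF.comp_add_left _).aestronglyMeasurable) N).sub
      aestronglyMeasurable_const).enorm
  rw [← lintegral_map' (hmeas.mono_ac hac) hproj.aemeasurable]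
  exact (lintegral_mono' hle le_rfl).trans_eq (lintegral_smul_measure _ _)

lemma tendsto_integral_abs_of_tendsto_lintegral_enorm {α ι : Type*} [MeasurableSpace α]
    {μ : Measure α} {l : Filter ι} {g : ι → α → ℝ}
    (hg : Tendsto (fun i => ∫⁻ x, ‖g i x‖ₑ ∂μ) l (𝓝 0)) :
    Tendsto (fun i => ∫ x, |g i x| ∂μ) l (𝓝 0) := by
  rw [tendsto_zero_iff_enorm_tendsto_zero]
  refine tendsto_of_tendsto_of_tendsto_of_le_of_le tendsto_const_nhds hg (fun _ => zero_le)
    fun i => ?_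
  simpa only [Real.enorm_abs] using enorm_integral_le_lintegral_enorm fun x => |g i x|

lemma cubeAverage_fin_two (N : ℕ) (φ : (Fin 2 → ℤ) → ℝ) :
    cubeAverage N φ = ((2 * N + 1 : ℝ) ^ 2)⁻¹ * ∑ n ∈ box N, φ n := by
  rw [cubeAverage, card_cube, Fintype.card_fin, smul_eq_mul]
  push_cast
  rfl

end LatticeErgodicTheorem

lemma det_Rot (φ : ℝ) : (Rot φ).det = 1 := by
  rw [Rot, det_fin_two_of, ← Real.cos_sq_add_sin_sq φ]
  ring

lemma isUnit_det_smul_Rot_mul {A : Matrix (Fin 2) (Fin 2) ℝ} (hA : IsUnit A.det) {c : ℝ}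
    (hc : c ≠ 0) (φ : ℝ) : IsUnit (c • (Rot φ * A)).det := by
  rw [det_smul, det_mul, det_Rot, one_mul]
  exact (hc.isUnit.pow _).mul hA

theorem single_ergodic_theorem_general {A1 A2 : Matrix (Fin 2) (Fin 2) ℝ}
    (hA1 : IsUnit A1.det) (hA2 : IsUnit A2.det) (hBM : IsUnit (recip A1 - recip A2).det)
    (hinc : Incommensurate (recip A1) (recip A2))
    {AM : Matrix (Fin 2) (Fin 2) ℝ} (hAM : AM = recip (recip A1 - recip A2))
    {FracM : (Fin 2 → ℝ) → Fin 2 → ℝ} (hFracM : ∀ x, x - FracM x ∈ lat AM ∧ FracM x ∈ cell AM)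
    {f : (Fin 2 → ℝ) → ℝ} (hf : IntegrableOn f (cell AM))
    {j : Fin 2} {Aj : Matrix (Fin 2) (Fin 2) ℝ} (hAj : Aj = ![A1, A2] j) :
    (∀ᵐ γ ∂(volume.restrict (cell Aj)),
      Tendsto
        (fun N : ℕ => ((2 * N + 1 : ℝ) ^ 2)⁻¹ * ∑ n ∈ box N, f (FracM (Aj *ᵥ iv n + γ)))
        atTop (𝓝 (⨍ x in cell AM, f x))) ∧
    Tendsto
      (fun N : ℕ => ∫ γ in cell Aj,
        |((2 * N + 1 : ℝ) ^ 2)⁻¹ * (∑ n ∈ box N, f (FracM (Aj *ᵥ iv n + γ))) -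
          ⨍ x in cell AM, f x|)
      atTop (𝓝 0) := by
  obtain ⟨hAj_det, hAj_inc⟩ : IsUnit Aj.det ∧ Incommensurate (recip Aj) (recip AM) := by
    rw [hAM, recip_recip hBM]
    subst hAj
    fin_cases j
    · exact ⟨hA1, hinc.sub_right (isUnit_det_recip hA2)⟩
    · exact ⟨hA2, hinc.sub_left (isUnit_det_recip hA1)⟩
  have hAM_det : IsUnit AM.det := hAM ▸ isUnit_det_recip hBM
  obtain ⟨hae, hL1⟩ := lattice_ergodic_theorem hAj_det hAM_det hAj_inc hFracM hf (isBounded_cell Aj)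
  simp only [← cubeAverage_fin_two]
  exact ⟨hae, tendsto_integral_abs_of_tendsto_lintegral_enorm hL1⟩

/-- Proposition: ergodic theorem for single-variable averages. -/
theorem single_ergodic_theorem (θ q : ℝ) (hq : 0 < q)
    (A A1 A2 B1 B2 BM AM : Matrix (Fin 2) (Fin 2) ℝ)
    (hA : IsUnit A.det)
    (hA1 : A1 = (Real.sqrt q)⁻¹ • (Rot (-(θ / 2)) * A))
    (hA2 : A2 = Real.sqrt q • (Rot (θ / 2) * A))
    (hB1 : B1 = recip A1) (hB2 : B2 = recip A2)
    (hBM : BM = B1 - B2) (hBMinv : IsUnit BM.det)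
    (hAM : AM = recip BM)
    (hinc : Incommensurate B1 B2) (hincstar : Incommensurate A1 A2)
    -- the moiré fractional-part map {·}_𝓜
    (FracM : (Fin 2 → ℝ) → (Fin 2 → ℝ))
    (hFracM : ∀ x : Fin 2 → ℝ, x - FracM x ∈ lat AM ∧ FracM x ∈ cell AM)
    (f : (Fin 2 → ℝ) → ℝ) (hf : IntegrableOn f (cell AM))
    (j : Fin 2) (Aj : Matrix (Fin 2) (Fin 2) ℝ) (hAj : Aj = ![A1, A2] j) :
    -- almost sure convergence in the shift γ_j ∈ Γ_j
    (∀ᵐ γ ∂(volume.restrict (cell Aj)),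
      Tendsto
        (fun N : ℕ => ((2 * N + 1 : ℝ) ^ 2)⁻¹ *
          ∑ n ∈ box N, f (FracM (Aj.mulVec (iv n) + γ)))
        atTop (𝓝 (⨍ x in cell AM, f x))) ∧
    -- convergence in the L¹(Γ_j)-sense
    Tendsto
      (fun N : ℕ => ∫ γ in cell Aj,
        |((2 * N + 1 : ℝ) ^ 2)⁻¹ *
            (∑ n ∈ box N, f (FracM (Aj.mulVec (iv n) + γ))) -
          ⨍ x in cell AM, f x|)
      atTop (𝓝 0) := by
  have hsqrt : √q ≠ 0 := (Real.sqrt_pos.2 hq).ne'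
  subst hA1 hA2 hB1 hB2 hBM
  exact single_ergodic_theorem_general (isUnit_det_smul_Rot_mul hA (inv_ne_zero hsqrt) _)
    (isUnit_det_smul_Rot_mul hA hsqrt _) hBMinv hinc hAM hFracM hf hAj

end
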